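/- There exists a Kochen-Specker candidate with exactly 17 vertices: a finite simple graph on 17 vertices that is not 010-colorable, has no cycle of length 4, is properly 4-colorable, has minimum degree at least 3, and in which every vertex lies on a triangle. -/

import Mathlib

open Matrix

/-- A 010-coloring of a graph: no two adjacent vertices are both 0,
and no triangle has all three vertices 1. -/
def Is010Coloring {V : Type*} (G : SimpleGraph V) (c : V → Fin 2) : Prop :=
  (∀ u v : V, G.Adj u v → ¬(c u = 0 ∧ c v = 0)) ∧
  (∀ u v w : V, G.Adj u v → G.Adj v w → G.Adj u w →
    ¬(c u = 1 ∧ c v = 1 ∧ c w = 1))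

/-- A graph is 010-colorable if it admits a 010-coloring. -/
def Is010Colorable {V : Type*} (G : SimpleGraph V) : Prop :=
  ∃ c : V → Fin 2, Is010Coloring G c

/-- An embedding of a graph into ℝ³: adjacent vertices map to orthogonal
vectors, and distinct vertices map to non-collinear vectors. -/
def IsEmbedding {V : Type*} (G : SimpleGraph V) (p : V → Fin 3 → ℝ) : Prop :=
  (∀ u v : V, G.Adj u v → p u ⬝ᵥ p v = 0) ∧
  (∀ u v : V, u ≠ v → crossProduct (p u) (p v) ≠ 0)

/-- A graph is embeddable if it admits an embedding into ℝ³. -/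
def Embeddable {V : Type*} (G : SimpleGraph V) : Prop :=
  ∃ p : V → Fin 3 → ℝ, IsEmbedding G p

/-- Neighbourhoods of the 17 vertices, as bit masks. -/
def ksMask : List ℕ := [6184, 9236, 24586, 20485, 33826, 34833, 18816, 17984, 75840, 70784, 658, 353, 66057, 65798, 32972, 81968, 45824]

/-- Adjacency in the 17-vertex candidate. -/
def ksAdj (u v : Fin 17) : Bool := (ksMask.getD u.val 0).testBit v.val

/-- The 17-vertex candidate. -/
def ksGraph : SimpleGraph (Fin 17) where
  Adj u v := ksAdj u v = true
  symm := ⟨by decide +kernel⟩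
  loopless := ⟨by decide +kernel⟩

theorem ksAdj_no_square : ∀ a b : Fin 17, ksAdj a b = true → ∀ c : Fin 17, ksAdj b c = true →
    a ≠ c → ∀ d : Fin 17, ksAdj c d = true → ksAdj d a = true → b = d := by
  decide +kernel

theorem ksGraph_not_colorable : ¬ Is010Colorable ksGraph := by
  rintro ⟨c, h0, h1⟩
  have e : ∀ u v : Fin 17, ksAdj u v = true → ¬ (c u = 0 ∧ c v = 0) := h0
  have t : ∀ u v w : Fin 17, (ksAdj u v && ksAdj v w && ksAdj u w) = true →
      c u = 0 ∨ c v = 0 ∨ c w = 0 := by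
    intro u v w h
    simp only [Bool.and_eq_true] at h
    have := h1 u v w h.1.1 h.1.2 h.2
    omega
  have e0 := e 0 3 (by decide +kernel)
  have e1 := e 0 5 (by decide +kernel)
  have e2 := e 0 11 (by decide +kernel)
  have e3 := e 0 12 (by decide +kernel)
  have e4 := e 1 2 (by decide +kernel)
  have e5 := e 1 4 (by decide +kernel)
  have e6 := e 1 10 (by decide +kernel)
  have e7 := e 1 13 (by decide +kernel)
  have e8 := e 2 3 (by decide +kernel)
  have e9 := e 2 13 (by decide +kernel)
  have e10 := e 2 14 (by decide +kernel)
  have e11 := e 3 12 (by decide +kernel)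
  have e12 := e 3 14 (by decide +kernel)
  have e13 := e 4 5 (by decide +kernel)
  have e14 := e 4 10 (by decide +kernel)
  have e15 := e 4 15 (by decide +kernel)
  have e16 := e 5 11 (by decide +kernel)
  have e17 := e 5 15 (by decide +kernel)
  have e18 := e 6 7 (by decide +kernel)
  have e19 := e 6 8 (by decide +kernel)
  have e20 := e 6 11 (by decide +kernel)
  have e21 := e 6 14 (by decide +kernel)
  have e22 := e 7 9 (by decide +kernel)
  have e23 := e 7 10 (by decide +kernel)
  have e24 := e 7 14 (by decide +kernel)
  have e25 := e 8 11 (by decide +kernel)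
  have e26 := e 8 13 (by decide +kernel)
  have e27 := e 8 16 (by decide +kernel)
  have e28 := e 9 10 (by decide +kernel)
  have e29 := e 9 12 (by decide +kernel)
  have e30 := e 9 16 (by decide +kernel)
  have e31 := e 12 16 (by decide +kernel)
  have e32 := e 13 16 (by decide +kernel)
  have e33 := e 14 15 (by decide +kernel)
  have e34 := e 15 16 (by decide +kernel)
  have t0 := t 0 3 12 (by decide +kernel)
  have t1 := t 0 5 11 (by decide +kernel)
  have t2 := t 1 2 13 (by decide +kernel)
  have t3 := t 1 4 10 (by decide +kernel)
  have t4 := t 2 3 14 (by decide +kernel)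
  have t5 := t 4 5 15 (by decide +kernel)
  have t6 := t 6 7 14 (by decide +kernel)
  have t7 := t 6 8 11 (by decide +kernel)
  have t8 := t 7 9 10 (by decide +kernel)
  have t9 := t 8 13 16 (by decide +kernel)
  have t10 := t 9 12 16 (by decide +kernel)
  clear e t h0 h1
  generalize (c 0 = 0) = p0 at *
  generalize (c 1 = 0) = p1 at *
  generalize (c 2 = 0) = p2 at *
  generalize (c 3 = 0) = p3 at *
  generalize (c 4 = 0) = p4 at *
  generalize (c 5 = 0) = p5 at *
  generalize (c 6 = 0) = p6 at *
  generalize (c 7 = 0) = p7 at *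
  generalize (c 8 = 0) = p8 at *
  generalize (c 9 = 0) = p9 at *
  generalize (c 10 = 0) = p10 at *
  generalize (c 11 = 0) = p11 at *
  generalize (c 12 = 0) = p12 at *
  generalize (c 13 = 0) = p13 at *
  generalize (c 14 = 0) = p14 at *
  generalize (c 15 = 0) = p15 at *
  generalize (c 16 = 0) = p16 at *
  clear c
  grind

/-- There exists a Kochen-Specker candidate with exactly 17 vertices: a
simple graph on 17 vertices that is not 010-colorable, has no 4-cycle, is
properly 4-colorable, has minimum degree at least 3 (every vertex has three
pairwise distinct neighbors), and in which every vertex lies on a triangle. -/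
theorem exists_ks_candidate_17 :
    ∃ G : SimpleGraph (Fin 17),
      ¬ Is010Colorable G ∧
      (¬ ∃ a b c d : Fin 17, a ≠ c ∧ b ≠ d ∧
        G.Adj a b ∧ G.Adj b c ∧ G.Adj c d ∧ G.Adj d a) ∧
      (∃ c : Fin 17 → Fin 4, ∀ u v : Fin 17, G.Adj u v → c u ≠ c v) ∧
      (∀ v : Fin 17, ∃ a b c : Fin 17, a ≠ b ∧ a ≠ c ∧ b ≠ c ∧
        G.Adj v a ∧ G.Adj v b ∧ G.Adj v c) ∧
      (∀ v : Fin 17, ∃ u w : Fin 17, G.Adj v u ∧ G.Adj v w ∧ G.Adj u w) := by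
  refine ⟨ksGraph, ksGraph_not_colorable, ?_, ⟨![0, 0, 1, 2, 1, 2, 0, 1, 1, 0, 2, 3, 1, 2, 3, 0, 3], ?_⟩, ?_, ?_⟩
  · rintro ⟨a, b, c, d, hac, hbd, h1, h2, h3, h4⟩
    exact hbd (ksAdj_no_square a b h1 c h2 hac d h3 h4)
  · change ∀ u v : Fin 17, ksAdj u v = true → _
    decide +kernel
  · change ∀ v : Fin 17, ∃ a b c : Fin 17, a ≠ b ∧ a ≠ c ∧ b ≠ c ∧
      ksAdj v a = true ∧ ksAdj v b = true ∧ ksAdj v c = true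
    decide +kernel
  · change ∀ v : Fin 17, ∃ u w : Fin 17, ksAdj v u = true ∧ ksAdj v w = true ∧ ksAdj u w = true
    decide +kernel
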